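/- Let n be a positive integer with n ≡ 1 (mod 3), and let q be an indeterminate. Define Aq(k) = [6k+1]·(q;q³)_k⁶/(q³;q³)_k⁶·q^{3k}, where [s] = (1-q^s)/(1-q) and (x;q³)_k = ∏_{i=0}^{k-1}(1-xq^{3i}). Then, as rational functions in q, ∑_{i+j ≤ n-1, i,j ≥ 0} Aq(i)Aq(j) ≡ [n]²·((q²;q³)_{(n-1)/3})⁶/((q³;q³)_{(n-1)/3})⁶ · {1 + 2[n]²(2-qⁿ)·∑_{r=1}^{(n-1)/3}(q^{3r-1}/[3r-1]² - q^{3r}/[3r]²)} (mod Φ_n(q)⁶), meaning the difference, when written as a fraction of polynomials with denominator coprime to Φ_n(q), has numerator divisible by Φ_n(q)⁶, where Φ_n(q) is the n-th cyclotomic polynomial. -/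

import Mathlib

open Finset

/-- The indeterminate `q` in the field of rational functions `ℚ(q)`. -/
noncomputable def qq : RatFunc ℚ := RatFunc.X

/-- The q-Pochhammer symbol `(x; q³)_k = ∏_{i=0}^{k-1} (1 - x q^{3i})`. -/
noncomputable def poch (x : RatFunc ℚ) (k : ℕ) : RatFunc ℚ :=
  ∏ i ∈ range k, (1 - x * qq ^ (3 * i))

/-- The q-integer `[s] = (1 - q^s)/(1 - q)`. -/
noncomputable def qint (s : ℕ) : RatFunc ℚ := (1 - qq ^ s) / (1 - qq)

/-- `A_q(k) = [6k+1] (q;q³)_k⁶ / (q³;q³)_k⁶ · q^{3k}`. -/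
noncomputable def Aq (k : ℕ) : RatFunc ℚ :=
  qint (6 * k + 1) * poch qq k ^ 6 / poch (qq ^ 3) k ^ 6 * qq ^ (3 * k)

/-!
Let `n = 3 m + 1` and `ε = 1 - q ^ n`. For `m < k < n` the factor `ε` of `(q; q³)_k` makes `A_q(k)`
divisible by `ε⁶`, so modulo `Φ_n⁶` the sum over `i + j < n` is the square of `∑_{k ≤ m} A_q(k)`.

Write `A_q(k) = w_k F_k(0)²`, where `F_k(t)` is the deformation
`(q y)_k (q / y)_k / ((q³ y)_k (q³ / y)_k)` (to the base `q³`) of `((q)_k / (q³)_k)²`, a function of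
`t = (1 - y)² / y`. Let `u` be the value of `t` at `y = q ^ n`. Jackson's `₈φ₇` sum evaluates
`G(t) = ∑_{k ≤ m} w_k F_k(u) F_k(t)` for every `t`, and `∑ w_k F_k(0)²` differs from
`2 G(0) - G(u)` by `∑ w_k (F_k(u) - F_k(0))²`. As `u` is of order `ε²`, this is
`u² ∑ A_q(k) s_k²` up to order `ε⁶`, where `s_k` is the logarithmic derivative of `F_k` at `0`.
Modulo `Φ_n`, the reflection `k ↦ m - k` negates `A_q(k)` and preserves `s_k`, so the sum gains
another factor `ε` and the error is of order `ε⁵`. Since `G(0)` is divisible by `ε`, squaring yields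
the congruence modulo `ε⁶`.
-/

section Pochhammer

variable {R : Type*} [CommRing R] {p x t : R}

/-- The `q`-shifted factorial `(x; p)_k`. -/
def qPochhammer (p x : R) (k : ℕ) : R :=
  ∏ i ∈ range k, (1 - x * p ^ i)

theorem qPochhammer_succ (k : ℕ) :
    qPochhammer p x (k + 1) = qPochhammer p x k * (1 - x * p ^ k) :=
  prod_range_succ _ _

theorem qPochhammer_succ' (k : ℕ) :
    qPochhammer p x (k + 1) = (1 - x) * qPochhammer p (x * p) k := by
  simp only [qPochhammer, prod_range_succ', pow_zero, mul_one, pow_succ', mul_assoc,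
    mul_comm (1 - x)]

/-- The product `(1 - x y) (1 - x / y)` as a polynomial in the deformation parameter
`t = (1 - y) ^ 2 / y`; at `t = 0` it is `(1 - x) ^ 2`. -/
def pairFactor (x t : R) : R :=
  (1 - x) ^ 2 - x * t

/-- The product `(x y; p)_k (x / y; p)_k` as a polynomial in `t = (1 - y) ^ 2 / y`. -/
def pairPochhammer (p x t : R) (k : ℕ) : R :=
  ∏ i ∈ range k, pairFactor (x * p ^ i) t

theorem pairPochhammer_succ (k : ℕ) :
    pairPochhammer p x t (k + 1) = pairPochhammer p x t k * pairFactor (x * p ^ k) t :=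
  prod_range_succ _ _

theorem pairPochhammer_succ' (k : ℕ) :
    pairPochhammer p x t (k + 1) = pairFactor x t * pairPochhammer p (x * p) t k := by
  simp only [pairPochhammer, prod_range_succ', pow_zero, mul_one, pow_succ', mul_assoc,
    mul_comm (pairFactor x t)]

theorem pairFactor_zero (x : R) : pairFactor x 0 = (1 - x) ^ 2 := by
  rw [pairFactor, mul_zero, sub_zero]

theorem pairPochhammer_zero (p x : R) (k : ℕ) :
    pairPochhammer p x 0 k = qPochhammer p x k ^ 2 := by
  simp only [pairPochhammer, pairFactor_zero, prod_pow, qPochhammer]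

theorem pairPochhammer_add (x t : R) (k l : ℕ) :
    pairPochhammer p x t (k + l) =
      pairPochhammer p x t k * pairPochhammer p (x * p ^ k) t l := by
  simp only [pairPochhammer, prod_range_add, pow_add, mul_assoc]

theorem pairFactor_three_term (x y w t : R) :
    (x - y) * (1 - x * y) * pairFactor w t =
      (w - y) * (1 - y * w) * pairFactor x t + (x - w) * (1 - w * x) * pairFactor y t := by
  simp only [pairFactor]
  ring

end Pochhammer

section Jackson

variable {K : Type*} [Field K] {p b c d : K}

/-- The parameters at which no denominator of Jackson's sum vanishes. -/
structure JacksonAdmissible (p b c d : K) : Prop where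
  base_ne_zero : p ≠ 0
  left_ne_zero : b ≠ 0
  right_ne_zero : d ≠ 0
  pow_ne_one (j : ℕ) : p ^ (j + 1) ≠ 1
  mul_shift_ne_one (j : ℕ) : b * c * p ^ (j + 1) ≠ 1
  mul_right_ne_one (j : ℕ) : b * d * p ^ j ≠ 1
  left_ne_right (i j : ℕ) : b * p ^ i ≠ d * p ^ j

theorem JacksonAdmissible.shift (h : JacksonAdmissible p b c d) :
    JacksonAdmissible p b (c * p) d where
  __ := h
  mul_shift_ne_one j := by simpa only [pow_succ', mul_assoc] using h.mul_shift_ne_one (j + 1)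

/-- The coefficient of `(b y)_k (b / y)_k (c p ^ (k + 1) y)_{m - k} (c p ^ (k + 1) / y)_{m - k}` in
Jackson's sum, as a function of `M = p ^ m`. -/
def jacksonCoeff (p b c d M : K) (k : ℕ) : K :=
  (1 - b * c * p ^ (2 * k)) * p ^ k *
      (qPochhammer p (b * c) k * qPochhammer p (c * p / d) k * qPochhammer p (c * d * M) k *
        qPochhammer p M⁻¹ k) /
    (qPochhammer p p k * qPochhammer p (b * d) k * qPochhammer p (b * p / (d * M)) k *
      qPochhammer p (b * c * p * M) k)

/-- The coefficient of `(d y)_m (d / y)_m` in Jackson's sum. -/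
def jacksonScale (p b c d : K) (m : ℕ) : K :=
  qPochhammer p (b * c) (m + 1) * qPochhammer p (c * p / b) m /
    (qPochhammer p (b * d) m * qPochhammer p (d / b) m)

/-- The coefficient with which the `k`-th term of the sum for `(c p, m)` contributes to the
`(k + 1)`-st term of the sum for `(c, m + 1)`, where `M = p ^ m` and `z = p ^ k`. -/
def jacksonRaise (p b c d M z : K) : K :=
  (1 - b * c) * (d * M - c * (z * p)) * (1 - c * d * M * (z * p)) /
    (z * (1 - b * c * p * z ^ 2) * (1 - b * d * M) * (b - d * M))

/-- The coefficient with which the `k`-th term of the sum for `(c p, m)` contributes to the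
`k`-th term of the sum for `(c, m + 1)`, where `M = p ^ m` and `z = p ^ k`. -/
def jacksonKeep (p b c d M z : K) : K :=
  (1 - b * c) * (b * z - d * M) * (1 - b * d * M * z) /
    (z * (1 - b * c * p * z ^ 2) * (1 - b * d * M) * (b - d * M))

theorem jacksonScale_succ (m : ℕ) :
    jacksonScale p b c d (m + 1) = (1 - b * c) * (1 - c * p / b) /
      ((1 - b * d * p ^ m) * (1 - d * p ^ m / b)) * jacksonScale p b (c * p) d m := by
  rw [jacksonScale, jacksonScale, qPochhammer_succ' (x := b * c),
    qPochhammer_succ' (x := c * p / b), qPochhammer_succ (x := b * d),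
    qPochhammer_succ (x := d / b), div_mul_div_comm]
  congr 1
  · ring_nf
  · ring

theorem jackson_three_term {M z : K} (hb : b ≠ 0) (hz : z ≠ 0) (hc : 1 - b * c * p * z ^ 2 ≠ 0)
    (t : K) :
    (1 - b * c) * (1 - c * p / b) / ((1 - b * d * M) * (1 - d * M / b)) * pairFactor (d * M) t =
      jacksonRaise p b c d M z * pairFactor (b * z) t +
        jacksonKeep p b c d M z * pairFactor (c * p * z) t := by
  have hzc : z * (1 - b * c * p * z ^ 2) ≠ 0 := mul_ne_zero hz hc
  rw [one_sub_div hb, one_sub_div hb, mul_div_assoc', mul_div_assoc', div_div_div_cancel_right₀ hb,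
    ← mul_div_mul_right _ _ hzc, jacksonRaise, jacksonKeep]
  linear_combination (1 - b * c) / (z * (1 - b * c * p * z ^ 2) * (1 - b * d * M) * (b - d * M)) *
    pairFactor_three_term (b * z) (c * p * z) (d * M) t

theorem jacksonRaise_mul {z : K} (hz : z ≠ 0) (hc : 1 - b * c * p * z ^ 2 ≠ 0) (M : K) :
    jacksonRaise p b c d M z * ((1 - b * c * p * z ^ 2) * z) =
      (1 - b * c) * (d * M - c * (z * p)) * (1 - c * d * M * (z * p)) /
        ((1 - b * d * M) * (b - d * M)) := by
  rw [jacksonRaise]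
  generalize 1 - b * c * p * z ^ 2 = f at *
  field_simp

theorem jacksonKeep_mul {M z : K} (hz : z ≠ 0) (hc : 1 - b * c * p * z ^ 2 ≠ 0) (hdM : d * M ≠ 0)
    (hbd : b * z ≠ d * M) :
    jacksonKeep p b c d M z * ((1 - b * c * p * z ^ 2) * z / (1 - b * z / (d * M))) =
      -(d * M) * (1 - b * c) * (1 - b * d * M * z) / ((1 - b * d * M) * (b - d * M)) := by
  have hsub : d * M - b * z ≠ 0 := sub_ne_zero.mpr hbd.symm
  rw [jacksonKeep, one_sub_div hdM, ← neg_sub (d * M) (b * z)]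
  generalize d * M - b * z = e at *
  generalize 1 - b * c * p * z ^ 2 = f at *
  field_simp

theorem jackson_pascal_identity {M : K} (hp : p ≠ 0) (hd : d ≠ 0) (hM : M ≠ 0) (z : K) :
    -(d * M) * (z * p) * (1 - b * c * (z * p) ^ 2) * (1 - c * p / d) * (1 - (M * p)⁻¹) *
        (1 - b * d * M) =
      (d * M - c * (z * p)) * ((1 - z * p) * (1 - b * d * z) * (1 - b * c * p * M * (z * p))) -
        d * M * (1 - b * d * M * (z * p)) * (1 - b * c * (z * p)) * (1 - c * p * (z * p) / d) *
          (1 - M⁻¹ * z) := by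
  field_simp
  ring

theorem jackson_pascal_scalar (h : JacksonAdmissible p b c d) (m k : ℕ) {M z w : K}
    (hM : M = p ^ m) (hz : z = p ^ k) (hw : w = z * p) :
    (1 - b * c * w ^ 2) * w / (1 - b / (d * M)) *
        ((1 - b * c) * (1 - c * p / d) * (1 - c * d * M * w) * (1 - (M * p)⁻¹) /
          ((1 - w) * (1 - b * d * z) * (1 - b * c * p * M * w))) =
      jacksonRaise p b c d M z * ((1 - b * c * p * z ^ 2) * z) +
        jacksonKeep p b c d M w * ((1 - b * c * p * w ^ 2) * w / (1 - b * w / (d * M))) *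
        ((1 - b * c * w) * (1 - c * p * w / d) * (1 - c * d * M * w) * (1 - M⁻¹ * z) /
        ((1 - w) * (1 - b * d * z) * (1 - b * c * p * M * w))) := by
  have hp := h.base_ne_zero
  have hd := h.right_ne_zero
  have hM0 : M ≠ 0 := hM ▸ pow_ne_zero m hp
  have hz0 : z ≠ 0 := hz ▸ pow_ne_zero k hp
  have hw' : w = p ^ (k + 1) := by rw [hw, hz, pow_succ]
  have hdM : d * M ≠ 0 := mul_ne_zero hd hM0
  have hne (j : ℕ) {x : K} (hx : x = b * c * p ^ (j + 1)) : 1 - x ≠ 0 :=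
    sub_ne_zero.mpr (hx ▸ (h.mul_shift_ne_one j).symm)
  have h₁ : 1 - w ≠ 0 := sub_ne_zero.mpr (hw' ▸ (h.pow_ne_one k).symm)
  have h₂ : 1 - b * d * M ≠ 0 := sub_ne_zero.mpr (hM ▸ (h.mul_right_ne_one m).symm)
  have h₃ : 1 - b * d * z ≠ 0 := sub_ne_zero.mpr (hz ▸ (h.mul_right_ne_one k).symm)
  have h₄ : b - d * M ≠ 0 := sub_ne_zero.mpr (by simpa [hM] using h.left_ne_right 0 m)
  have h₅ : 1 - b * c * p * M * w ≠ 0 := hne (m + k + 1) (by rw [hM, hw']; ring)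
  have hw0 : w ≠ 0 := hw ▸ mul_ne_zero hz0 hp
  have key := jackson_pascal_identity (b := b) (c := c) hp hd hM0 z
  rw [← hw] at key
  have hFE := mul_ne_zero h₂ h₄
  have hD := mul_ne_zero (mul_ne_zero h₁ h₃) h₅
  rw [jacksonRaise_mul hz0 (hne (2 * k) (by rw [hz]; ring)),
    jacksonKeep_mul hw0 (hne (2 * k + 2) (by rw [hw']; ring)) hdM
      (by rw [hw', hM]; exact h.left_ne_right _ _), ← hw, one_sub_div hdM, ← neg_sub b (d * M),
      div_div_eq_mul_div, div_mul_div_comm, div_mul_div_comm,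
      div_add_div _ _ hFE (mul_ne_zero hFE hD),
      div_eq_div_iff (mul_ne_zero (neg_ne_zero.mpr h₄) hD) (mul_ne_zero hFE (mul_ne_zero hFE hD))]
  generalize (1 - w) * (1 - b * d * z) * (1 - b * c * p * M * w) = D at *
  generalize 1 - b * d * M = F at *
  generalize b - d * M = E at *
  linear_combination -((1 - b * c) * (1 - c * d * M * w) * F * E ^ 2 * D) * key

theorem jacksonCoeff_zero (M : K) : jacksonCoeff p b c d M 0 = 1 - b * c := by
  simp [jacksonCoeff, qPochhammer]

theorem jacksonCoeff_succ_self (hp : p ≠ 0) (m : ℕ) :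
    jacksonCoeff p b c d (p ^ m) (m + 1) = 0 := by
  have hzero : 1 - (p ^ m)⁻¹ * p ^ m = 0 := by rw [inv_mul_cancel₀ (pow_ne_zero m hp), sub_self]
  rw [jacksonCoeff, qPochhammer_succ (x := (p ^ m)⁻¹), hzero, mul_zero, mul_zero, mul_zero,
    zero_div]

theorem jacksonCoeff_keep_zero (h : JacksonAdmissible p b c d) (m : ℕ) :
    jacksonKeep p b c d (p ^ m) 1 * jacksonCoeff p b (c * p) d (p ^ m) 0 =
      jacksonCoeff p b c d (p ^ (m + 1)) 0 := by
  have h₁ : 1 - b * c * p ≠ 0 := sub_ne_zero.mpr (by simpa using (h.mul_shift_ne_one 0).symm)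
  have h₂ : 1 - b * d * p ^ m ≠ 0 := sub_ne_zero.mpr (h.mul_right_ne_one m).symm
  have h₃ : b - d * p ^ m ≠ 0 := sub_ne_zero.mpr (by simpa using h.left_ne_right 0 m)
  rw [jacksonCoeff_zero, jacksonCoeff_zero, jacksonKeep, mul_one, mul_one, one_pow, mul_one,
    one_mul, ← mul_assoc b c p, div_mul_eq_mul_div, div_eq_iff (mul_ne_zero (mul_ne_zero h₁ h₂) h₃)]
  ring

theorem jacksonCoeff_pascal (h : JacksonAdmissible p b c d) (m k : ℕ) :
    jacksonCoeff p b c d (p ^ (m + 1)) (k + 1) =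
      jacksonRaise p b c d (p ^ m) (p ^ k) * jacksonCoeff p b (c * p) d (p ^ m) k +
        jacksonKeep p b c d (p ^ m) (p ^ (k + 1)) *
          jacksonCoeff p b (c * p) d (p ^ m) (k + 1) := by
  have key := jackson_pascal_scalar h m k rfl rfl (pow_succ p k)
  set C := qPochhammer p (b * c * p) k * qPochhammer p (c * p * p / d) k *
      qPochhammer p (c * d * p ^ m * p) k * qPochhammer p (p ^ m)⁻¹ k /
    (qPochhammer p p k * qPochhammer p (b * d) k * qPochhammer p (b * p / (d * p ^ m)) k *
      qPochhammer p (b * c * p * p ^ m * p) k) with hC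
  have hl : jacksonCoeff p b c d (p ^ (m + 1)) (k + 1) = C *
    ((1 - b * c * (p ^ (k + 1)) ^ 2) * p ^ (k + 1) / (1 - b / (d * p ^ m)) *
        ((1 - b * c) * (1 - c * p / d) * (1 - c * d * p ^ m * p ^ (k + 1)) * (1 - (p ^ m * p)⁻¹) /
          ((1 - p ^ (k + 1)) * (1 - b * d * p ^ k) * (1 - b * c * p * p ^ m * p ^ (k + 1))))) := by
    have hp := h.base_ne_zero
    have h₁ : c * p / d * p = c * p * p / d := by ring
    have h₂ : (p ^ m * p)⁻¹ * p = (p ^ m)⁻¹ := by field_simp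
    have h₃ : b * p / (d * (p ^ m * p)) = b / (d * p ^ m) := by field_simp
    have h₄ : b / (d * p ^ m) * p = b * p / (d * p ^ m) := by ring
    rw [hC, div_mul_div_comm, div_mul_div_comm, jacksonCoeff, pow_succ p m,
      qPochhammer_succ' (x := b * c), qPochhammer_succ' (x := c * p / d),
      qPochhammer_succ' (x := (p ^ m * p)⁻¹), qPochhammer_succ' (x := b * p / (d * (p ^ m * p))),
      h₁, h₂, h₃, h₄]
    simp only [qPochhammer_succ]
    congr 1 <;> ring_nf
  have hr₀ : jacksonCoeff p b (c * p) d (p ^ m) k =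
      C * ((1 - b * c * p * (p ^ k) ^ 2) * p ^ k) := by
    rw [hC, jacksonCoeff, div_mul_eq_mul_div]
    congr 1 <;> ring_nf
  have hr₁ : jacksonCoeff p b (c * p) d (p ^ m) (k + 1) = C *
      ((1 - b * c * p * (p ^ (k + 1)) ^ 2) * p ^ (k + 1) / (1 - b * p ^ (k + 1) / (d * p ^ m)) *
        ((1 - b * c * p ^ (k + 1)) * (1 - c * p * p ^ (k + 1) / d) *
            (1 - c * d * p ^ m * p ^ (k + 1)) * (1 - (p ^ m)⁻¹ * p ^ k) /
        ((1 - p ^ (k + 1)) * (1 - b * d * p ^ k) * (1 - b * c * p * p ^ m * p ^ (k + 1))))) := by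
    rw [hC, div_mul_div_comm, div_mul_div_comm, jacksonCoeff]
    simp only [qPochhammer_succ]
    congr 1 <;> ring_nf
  rw [hl, hr₀, hr₁, key]
  ring

theorem sum_jacksonCoeff_mul (h : JacksonAdmissible p b c d) (m : ℕ) (F : ℕ → K) :
    ∑ k ∈ range (m + 2), jacksonCoeff p b c d (p ^ (m + 1)) k * F k =
      ∑ k ∈ range (m + 1), jacksonCoeff p b (c * p) d (p ^ m) k *
        (jacksonRaise p b c d (p ^ m) (p ^ k) * F (k + 1) +
          jacksonKeep p b c d (p ^ m) (p ^ k) * F k) := by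
  have hkeep := sum_range_succ' (fun k ↦ jacksonKeep p b c d (p ^ m) (p ^ k) *
    jacksonCoeff p b (c * p) d (p ^ m) k * F k) (m + 1)
  rw [sum_range_succ, jacksonCoeff_succ_self h.base_ne_zero, mul_zero, zero_mul, add_zero,
    pow_zero, jacksonCoeff_keep_zero h] at hkeep
  simp only [mul_add, sum_add_distrib, mul_left_comm (jacksonCoeff _ _ _ _ _ _), ← mul_assoc]
  rw [hkeep, sum_range_succ', ← add_assoc, ← sum_add_distrib]
  simp only [jacksonCoeff_pascal h, add_mul]

/-- Replacing `t` by `(1 - y) ^ 2 / y`, this is Jackson's terminating very-well-poised `₈φ₇` sum,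
read as an expansion of `(d y)_m (d / y)_m`. -/
theorem sum_jacksonCoeff_mul_pairPochhammer (h : JacksonAdmissible p b c d) (t : K) (m : ℕ) :
    ∑ k ∈ range (m + 1), jacksonCoeff p b c d (p ^ m) k *
        (pairPochhammer p b t k * pairPochhammer p (c * p * p ^ k) t (m - k)) =
      jacksonScale p b c d m * pairPochhammer p d t m := by
  induction m generalizing c with
  | zero => simp [jacksonCoeff, jacksonScale, pairPochhammer, qPochhammer]
  | succ m ih =>
    have hstep : ∀ k ∈ range (m + 1),
        jacksonRaise p b c d (p ^ m) (p ^ k) * (pairPochhammer p b t (k + 1) *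
            pairPochhammer p (c * p * p ^ (k + 1)) t (m + 1 - (k + 1))) +
          jacksonKeep p b c d (p ^ m) (p ^ k) * (pairPochhammer p b t k *
            pairPochhammer p (c * p * p ^ k) t (m + 1 - k)) =
        (1 - b * c) * (1 - c * p / b) / ((1 - b * d * p ^ m) * (1 - d * p ^ m / b)) *
          pairFactor (d * p ^ m) t *
          (pairPochhammer p b t k * pairPochhammer p (c * p * p * p ^ k) t (m - k)) := by
      intro k hk
      have hc : 1 - b * c * p * (p ^ k) ^ 2 ≠ 0 := sub_ne_zero.mpr <| by
        rw [← pow_mul, mul_assoc, ← pow_succ']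
        exact (h.mul_shift_ne_one (k * 2)).symm
      rw [jackson_three_term h.left_ne_zero (pow_ne_zero k h.base_ne_zero) hc,
        Nat.succ_sub (mem_range_succ_iff.mp hk), Nat.succ_sub_succ, pairPochhammer_succ,
        pairPochhammer_succ', pow_succ]
      ring_nf
    rw [sum_jacksonCoeff_mul h, jacksonScale_succ, pairPochhammer_succ,
      sum_congr rfl fun k hk ↦ (congrArg _ (hstep k hk)).trans (mul_left_comm _ _ _), ← mul_sum,
      ih h.shift]
    ring

end Jackson

section ValuationCongruence

variable {R Γ₀ : Type*} [CommRing R] [LinearOrderedCommGroupWithZero Γ₀] (v : Valuation R Γ₀)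
  {r : Γ₀}

theorem map_mul_le_of_le_one_left {x y : R} (hx : v x ≤ 1) (hy : v y ≤ r) : v (x * y) ≤ r := by
  simpa only [map_mul, one_mul] using mul_le_mul' hx hy

theorem map_mul_le_of_le_one_right {x y : R} (hx : v x ≤ r) (hy : v y ≤ 1) : v (x * y) ≤ r := by
  simpa only [map_mul, mul_one] using mul_le_mul' hx hy

theorem map_mul_sub_mul_le {x x' y y' : R} (hx' : v x' ≤ 1) (hy : v y ≤ 1) (hxx' : v (x - x') ≤ r)
    (hyy' : v (y - y') ≤ r) : v (x * y - x' * y') ≤ r := by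
  rw [show x * y - x' * y' = (x - x') * y + x' * (y - y') by ring]
  exact v.map_add_le (map_mul_le_of_le_one_right v hxx' hy) (map_mul_le_of_le_one_left v hx' hyy')

theorem map_pow_sub_pow_le {x y : R} (hx : v x ≤ 1) (hy : v y ≤ 1) (hxy : v (x - y) ≤ r) (k : ℕ) :
    v (x ^ k - y ^ k) ≤ r := by
  induction k with
  | zero => simp
  | succ k ih =>
    rw [pow_succ, pow_succ]
    exact map_mul_sub_mul_le v (by simpa only [map_pow] using pow_le_one' hy k) hx ih hxy

theorem map_prod_sub_one_add_mul_sum_le {ρ e : ℕ → R} {t : R} {k : ℕ} (ht : v t ≤ 1)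
    (he : ∀ i < k, v (e i) ≤ 1) (hρ : ∀ i < k, v (ρ i - (1 + t * e i)) ≤ v t ^ 2) :
    v (∏ i ∈ range k, ρ i - (1 + t * ∑ i ∈ range k, e i)) ≤ v t ^ 2 := by
  induction k with
  | zero => simp
  | succ k ih =>
    have hek := he k k.lt_add_one
    have hsum : v (∑ i ∈ range k, e i) ≤ 1 :=
      v.map_sum_le fun i hi ↦ he i ((mem_range.mp hi).trans k.lt_add_one)
    have hone {x : R} (hx : v x ≤ 1) : v (1 + t * x) ≤ 1 :=
      v.map_add_le v.map_one.le (map_mul_le_of_le_one_left v ht hx)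
    have hρk : v (ρ k) ≤ 1 := by
      rw [← sub_add_cancel (ρ k) (1 + t * e k)]
      exact v.map_add_le ((hρ k k.lt_add_one).trans (pow_le_one' ht 2)) (hone hek)
    have hmul := map_mul_sub_mul_le v (hone hsum) hρk
      (ih (fun i hi ↦ he i (hi.trans k.lt_add_one)) fun i hi ↦ hρ i (hi.trans k.lt_add_one))
      (hρ k k.lt_add_one)
    have hcross : v (t ^ 2 * ((∑ i ∈ range k, e i) * e k)) ≤ v t ^ 2 := by
      rw [map_mul, map_pow]
      exact mul_le_of_le_one_right' (map_mul_le_of_le_one_left v hsum hek)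
    rw [prod_range_succ, sum_range_succ]
    convert v.map_add_le hmul hcross using 2
    ring

theorem map_sum_triangle_sub_sq_le {f : ℕ → R} {m n : ℕ} (hmn : 2 * m < n)
    (hf : ∀ i < n, v (f i) ≤ 1) (hr : ∀ i < n, m < i → v (f i) ≤ r) :
    v (∑ i ∈ range n, ∑ j ∈ range (n - i), f i * f j - (∑ i ∈ range (m + 1), f i) ^ 2) ≤ r := by
  set T := (range n).sigma fun i ↦ range (n - i)
  set S := (range (m + 1)).sigma fun _ ↦ range (m + 1)
  have hST : S ⊆ T := by
    intro x hx
    simp only [S, T, mem_sigma, mem_range] at hx ⊢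
    omega
  rw [sq, sum_mul_sum, sum_sigma', sum_sigma', ← sum_sdiff_eq_sub hST]
  refine v.map_sum_le fun x hx ↦ ?_
  simp only [S, T, mem_sdiff, mem_sigma, mem_range] at hx
  rcases le_or_gt x.1 m with hxm | hxm
  · exact map_mul_le_of_le_one_left v (hf _ (by omega)) (hr _ (by omega) (by omega))
  · exact map_mul_le_of_le_one_right v (hr _ (by omega) hxm) (hf _ (by omega))

theorem map_sum_mul_le_of_antisymm {a s f : ℕ → R} {m : ℕ} (hs : ∀ k ≤ m, v (s k) ≤ 1)
    (hf : ∀ k ≤ m, v (f k) ≤ 1) (ha : ∀ k ≤ m, v (a k - (f k - f (m - k))) ≤ r)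
    (hsymm : ∀ k ≤ m, v (s k - s (m - k)) ≤ r) :
    v (∑ k ∈ range (m + 1), a k * s k) ≤ r := by
  have hreflect : ∑ k ∈ range (m + 1), f (m - k) * s k = ∑ k ∈ range (m + 1), f k * s (m - k) := by
    rw [← sum_range_reflect]
    refine sum_congr rfl fun k hk ↦ ?_
    have hkm := mem_range_succ_iff.mp hk
    rw [Nat.add_sub_cancel, Nat.sub_sub_self hkm]
  have hsplit : ∑ k ∈ range (m + 1), a k * s k =
      ∑ k ∈ range (m + 1), ((a k - (f k - f (m - k))) * s k + f k * (s k - s (m - k))) := by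
    simp only [sub_mul, mul_sub, sum_add_distrib, sum_sub_distrib, hreflect]
    ring
  rw [hsplit]
  refine v.map_sum_le fun k hk ↦ ?_
  have hkm := mem_range_succ_iff.mp hk
  exact v.map_add_le (map_mul_le_of_le_one_right v (ha k hkm) (hs k hkm))
    (map_mul_le_of_le_one_left v (hf k hkm) (hsymm k hkm))

end ValuationCongruence

section PochhammerValuation

variable {R Γ₀ : Type*} [CommRing R] [LinearOrderedCommGroupWithZero Γ₀] {v : Valuation R Γ₀}
  {p x t : R} {k : ℕ}

theorem map_mul_pow_le_one (hp : v p ≤ 1) (hx : v x ≤ 1) (i : ℕ) : v (x * p ^ i) ≤ 1 :=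
  map_mul_le_of_le_one_left v hx (by simpa only [map_pow] using pow_le_one' hp i)

theorem map_qPochhammer_eq_one (hx : ∀ i < k, v (1 - x * p ^ i) = 1) :
    v (qPochhammer p x k) = 1 := by
  rw [qPochhammer, map_prod]
  exact prod_eq_one fun i hi ↦ hx i (mem_range.mp hi)

theorem map_qPochhammer_le_one (hp : v p ≤ 1) (hx : v x ≤ 1) (k : ℕ) :
    v (qPochhammer p x k) ≤ 1 := by
  rw [qPochhammer, map_prod]
  exact prod_le_one' fun i _ ↦ v.map_sub_le v.map_one.le (map_mul_pow_le_one hp hx i)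

theorem map_pairPochhammer_eq_one (hp : v p ≤ 1) (hx : v x ≤ 1)
    (hx₁ : ∀ i < k, v (1 - x * p ^ i) = 1) (ht : v t < 1) : v (pairPochhammer p x t k) = 1 := by
  rw [pairPochhammer, map_prod]
  refine prod_eq_one fun i hi ↦ ?_
  have hsq : v ((1 - x * p ^ i) ^ 2) = 1 := by rw [map_pow, hx₁ i (mem_range.mp hi), one_pow]
  have hlt : v (x * p ^ i * t) < v ((1 - x * p ^ i) ^ 2) := by
    rw [hsq, map_mul, mul_comm]
    exact mul_lt_one_of_lt_of_le ht (map_mul_pow_le_one hp hx i)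
  rw [pairFactor, v.map_eq_of_sub_lt (x := (1 - x * p ^ i) ^ 2), hsq]
  rwa [sub_sub_cancel_left, v.map_neg]

theorem map_qPochhammer_mul_sub_le (hp : v p ≤ 1) (hx : v x ≤ 1) (k j : ℕ) :
    v (qPochhammer p x k * qPochhammer p p j -
      (∏ i ∈ range k, -(x * p ^ i)) * qPochhammer p p (k + j)) ≤ v (1 - x * p ^ (k + j)) := by
  induction k generalizing j with
  | zero => simp [qPochhammer]
  | succ k ih =>
    have hih := map_mul_le_of_le_one_left v (map_mul_pow_le_one hp hx k) (ih (j + 1))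
    have hrest : v ((1 - x * p ^ (k + (j + 1))) * (qPochhammer p x k * qPochhammer p p j)) ≤
        v (1 - x * p ^ (k + (j + 1))) :=
      map_mul_le_of_le_one_right v le_rfl <|
        map_mul_le_of_le_one_left v (map_qPochhammer_le_one hp hx k)
          (map_qPochhammer_le_one hp hp j)
    rw [Nat.add_right_comm, add_assoc]
    refine (congrArg v ?_).trans_le (v.map_sub_le hrest hih)
    rw [qPochhammer_succ, qPochhammer_succ (p := p) (x := p), prod_range_succ]
    ring

end PochhammerValuation

section Dougall

variable {K : Type*} [Field K] {q t : K}

theorem pairPochhammer_eq_mul {y : K} (hy : y ≠ 0) (p x : K) (k : ℕ) :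
    pairPochhammer p x ((1 - y) ^ 2 / y) k =
      qPochhammer p (x * y) k * qPochhammer p (x / y) k := by
  rw [pairPochhammer, qPochhammer, qPochhammer, ← prod_mul_distrib]
  refine prod_congr rfl fun i _ ↦ ?_
  rw [pairFactor]
  field_simp
  ring

/-- The quotient `(x y)_k (x / y)_k / ((p y)_k (p / y)_k)` of shifted factorials to the base `p`,
as a function of `t = (1 - y) ^ 2 / y`. -/
def pairRatio (p x t : K) (k : ℕ) : K :=
  pairPochhammer p x t k / pairPochhammer p p t k

theorem pairRatio_zero (p x : K) (k : ℕ) :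
    pairRatio p x 0 k = (qPochhammer p x k / qPochhammer p p k) ^ 2 := by
  rw [pairRatio, pairPochhammer_zero, pairPochhammer_zero, div_pow]

/-- The `q`-integer `[s] = 1 + q + ⋯ + q ^ (s - 1)`, for `q ≠ 1`. -/
def qNumber (q : K) (s : ℕ) : K :=
  (1 - q ^ s) / (1 - q)

/-- The part of `dougallTerm q k` left after splitting off the two factors that get deformed. -/
def dougallWeight (q : K) (k : ℕ) : K :=
  qNumber q (6 * k + 1) * (qPochhammer (q ^ 3) q k / qPochhammer (q ^ 3) (q ^ 3) k) ^ 2 *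
    q ^ (3 * k)

/-- The term `A_q(k) = [6k + 1] (q; q³)_k⁶ / (q³; q³)_k⁶ q^(3k)`. -/
def dougallTerm (q : K) (k : ℕ) : K :=
  qNumber q (6 * k + 1) * qPochhammer (q ^ 3) q k ^ 6 / qPochhammer (q ^ 3) (q ^ 3) k ^ 6 *
    q ^ (3 * k)

theorem dougallTerm_eq (q : K) (k : ℕ) :
    dougallTerm q k = dougallWeight q k * pairRatio (q ^ 3) q 0 k ^ 2 := by
  rw [dougallTerm, dougallWeight, pairRatio_zero]
  ring

theorem pow_ne_pow_of_not_isOfFinOrder (hq₀ : q ≠ 0) (hq : ¬IsOfFinOrder q) {i j : ℕ}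
    (hij : i ≠ j) : q ^ i ≠ q ^ j := by
  rw [← Units.val_mk0 hq₀, Units.isOfFinOrder_val] at hq
  exact fun h ↦ (injective_pow_iff_not_isOfFinOrder.mpr hq).ne hij (Units.ext (by simpa using h))

theorem one_sub_ne_zero_of_not_isOfFinOrder (hq : ¬IsOfFinOrder q) : 1 - q ≠ 0 :=
  sub_ne_zero.mpr fun h ↦ hq (h ▸ IsOfFinOrder.one)

theorem one_sub_mul_qNumber (hq : ¬IsOfFinOrder q) (s : ℕ) : (1 - q) * qNumber q s = 1 - q ^ s :=
  mul_div_cancel₀ _ (one_sub_ne_zero_of_not_isOfFinOrder hq)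

theorem jacksonAdmissible_cube (hq₀ : q ≠ 0) (hq : ¬IsOfFinOrder q) :
    JacksonAdmissible (q ^ 3) q 1 (q ^ 2) where
  base_ne_zero := pow_ne_zero 3 hq₀
  left_ne_zero := hq₀
  right_ne_zero := pow_ne_zero 2 hq₀
  pow_ne_one j := by
    have := pow_ne_pow_of_not_isOfFinOrder hq₀ hq (i := 3 * (j + 1)) (j := 0) (by omega)
    simpa only [pow_mul, pow_zero] using this
  mul_shift_ne_one j := by
    have := pow_ne_pow_of_not_isOfFinOrder hq₀ hq (i := 1 + 3 * (j + 1)) (j := 0) (by omega)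
    simpa only [pow_add, pow_mul, pow_zero, pow_one, mul_one] using this
  mul_right_ne_one j := by
    have := pow_ne_pow_of_not_isOfFinOrder hq₀ hq (i := 1 + 2 + 3 * j) (j := 0) (by omega)
    simpa only [pow_add, pow_mul, pow_zero, pow_one] using this
  left_ne_right i j := by
    have := pow_ne_pow_of_not_isOfFinOrder hq₀ hq (i := 1 + 3 * i) (j := 2 + 3 * j) (by omega)
    simpa only [pow_add, pow_mul, pow_one] using this

theorem jacksonCoeff_cube (hq₀ : q ≠ 0) (hq : ¬IsOfFinOrder q) (m k : ℕ) :
    jacksonCoeff (q ^ 3) q 1 (q ^ 2) ((q ^ 3) ^ m) k = (1 - q) * (dougallWeight q k *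
      pairRatio (q ^ 3) q ((1 - q ^ (3 * m + 1)) ^ 2 / q ^ (3 * m + 1)) k) := by
  have hQ : q ^ (3 * m + 1) ≠ 0 := pow_ne_zero _ hq₀
  have h₁ : 1 * q ^ 3 / q ^ 2 = q := by field_simp
  have h₂ : 1 * q ^ 2 * (q ^ 3) ^ m = q * q ^ (3 * m + 1) := by ring
  have h₃ : ((q ^ 3) ^ m)⁻¹ = q / q ^ (3 * m + 1) := by field_simp; ring
  have h₄ : q * q ^ 3 / (q ^ 2 * (q ^ 3) ^ m) = q ^ 3 / q ^ (3 * m + 1) := by field_simp; ring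
  have h₅ : q * 1 * q ^ 3 * (q ^ 3) ^ m = q ^ 3 * q ^ (3 * m + 1) := by ring
  have h₆ : q * q ^ 2 = q ^ 3 := by ring
  rw [jacksonCoeff, pairRatio, pairPochhammer_eq_mul hQ, pairPochhammer_eq_mul hQ, dougallWeight,
    mul_assoc (qNumber _ _ * _), mul_assoc (qNumber _ _),
    ← mul_assoc (1 - q), one_sub_mul_qNumber hq, h₁, h₂, h₃, h₄, h₅, h₆, mul_one]
  ring

theorem jacksonScale_cube (hq₀ : q ≠ 0) (hq : ¬IsOfFinOrder q) (m : ℕ) :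
    jacksonScale (q ^ 3) q 1 (q ^ 2) m = (1 - q) * (qNumber q (3 * m + 1) *
      (qPochhammer (q ^ 3) (q ^ 2) m / qPochhammer (q ^ 3) (q ^ 3) m)) := by
  have hP : qPochhammer (q ^ 3) q m ≠ 0 := prod_ne_zero_iff.mpr fun i _ ↦ sub_ne_zero.mpr <| by
    rw [← pow_mul, ← pow_succ']
    simpa using pow_ne_pow_of_not_isOfFinOrder hq₀ hq (Nat.succ_ne_zero (3 * i)).symm
  have h₁ : 1 * q ^ 3 / q = q ^ 2 := by field_simp
  have h₂ : q ^ 2 / q = q := by field_simp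
  have h₃ : q * q ^ 2 = q ^ 3 := by ring
  have h₄ : 1 - q * (q ^ 3) ^ m = 1 - q ^ (3 * m + 1) := by ring
  rw [← mul_assoc, one_sub_mul_qNumber hq, jacksonScale, h₁, h₂, h₃, mul_one, qPochhammer_succ, h₄]
  field_simp

/-- Jackson's sum in the base `q³`: deforming two of the factors of `dougallTerm q` by `t`, with the
other two deformed by the value of `t` that belongs to `y = q ^ (3 m + 1)`, makes the sum closed. -/
theorem sum_dougallWeight_mul (hq₀ : q ≠ 0) (hq : ¬IsOfFinOrder q) (m : ℕ)
    (ht : pairPochhammer (q ^ 3) (q ^ 3) t m ≠ 0) :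
    ∑ k ∈ range (m + 1), dougallWeight q k *
        (pairRatio (q ^ 3) q ((1 - q ^ (3 * m + 1)) ^ 2 / q ^ (3 * m + 1)) k *
          pairRatio (q ^ 3) q t k) =
      qNumber q (3 * m + 1) * (qPochhammer (q ^ 3) (q ^ 2) m / qPochhammer (q ^ 3) (q ^ 3) m) *
        pairRatio (q ^ 3) (q ^ 2) t m := by
  have hterm : ∀ k ∈ range (m + 1), pairPochhammer (q ^ 3) q t k *
      pairPochhammer (q ^ 3) (1 * q ^ 3 * (q ^ 3) ^ k) t (m - k) /
        pairPochhammer (q ^ 3) (q ^ 3) t m = pairRatio (q ^ 3) q t k := by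
    intro k hk
    have hsplit : pairPochhammer (q ^ 3) (q ^ 3) t m = pairPochhammer (q ^ 3) (q ^ 3) t k *
        pairPochhammer (q ^ 3) (q ^ 3 * (q ^ 3) ^ k) t (m - k) := by
      rw [← pairPochhammer_add, Nat.add_sub_cancel' (mem_range_succ_iff.mp hk)]
    rw [hsplit] at ht ⊢
    rw [one_mul, mul_div_mul_right _ _ (right_ne_zero_of_mul ht), pairRatio]
  have hsum := sum_jacksonCoeff_mul_pairPochhammer (jacksonAdmissible_cube hq₀ hq) t m
  apply_fun (· / pairPochhammer (q ^ 3) (q ^ 3) t m) at hsum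
  rw [sum_div, jacksonScale_cube hq₀ hq, mul_div_assoc, ← pairRatio] at hsum
  apply mul_left_cancel₀ (one_sub_ne_zero_of_not_isOfFinOrder hq)
  rw [← mul_assoc, ← hsum, mul_sum]
  refine sum_congr rfl fun k hk ↦ ?_
  rw [mul_div_assoc, hterm k hk, jacksonCoeff_cube hq₀ hq]
  ring

end Dougall

section FirstOrder

variable {K Γ₀ : Type*} [Field K] [LinearOrderedCommGroupWithZero Γ₀] {v : Valuation K Γ₀}
  {p x t : K} {k : ℕ}

/-- The Koebe function `x / (1 - x) ^ 2`, minus the logarithmic derivative of `pairFactor x` at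
`t = 0`. -/
def koebe (x : K) : K :=
  x / (1 - x) ^ 2

theorem pairFactor_eq_mul (hx : 1 - x ≠ 0) (t : K) :
    pairFactor x t = pairFactor x 0 * (1 - t * koebe x) := by
  rw [pairFactor, pairFactor_zero, koebe]
  field_simp

/-- The logarithmic derivative of `t ↦ pairRatio p x t k` at `t = 0`. -/
def koebeSum (p x : K) (k : ℕ) : K :=
  ∑ i ∈ range k, (koebe (p * p ^ i) - koebe (x * p ^ i))

theorem map_koebe_le_one (hx : v x ≤ 1) (hx₁ : v (1 - x) = 1) : v (koebe x) ≤ 1 := by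
  rwa [koebe, map_div₀, map_pow, hx₁, one_pow, div_one]

theorem map_one_sub_div_one_sub_sub_le {a b : K} (ha : v a ≤ 1) (hb : v b ≤ 1) (ht : v t < 1) :
    v ((1 - t * a) / (1 - t * b) - (1 + t * (b - a))) ≤ v t ^ 2 := by
  have hunit : v (1 - t * b) = 1 :=
    v.map_one_sub_of_lt (by rw [map_mul]; exact mul_lt_one_of_lt_of_le ht hb)
  have hne : 1 - t * b ≠ 0 := v.ne_zero_iff.mp (hunit ▸ one_ne_zero)
  have heq : (1 - t * a) / (1 - t * b) - (1 + t * (b - a)) =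
      t ^ 2 * (b * (b - a)) / (1 - t * b) := by
    field_simp
    ring
  rw [heq, map_div₀, hunit, div_one, map_mul, map_pow]
  exact mul_le_of_le_one_right' (map_mul_le_of_le_one_left v hb (v.map_sub_le hb ha))

theorem pairRatio_eq_mul_prod (hx : ∀ i < k, 1 - x * p ^ i ≠ 0) (hp : ∀ i < k, 1 - p * p ^ i ≠ 0)
    (t : K) :
    pairRatio p x t k = pairRatio p x 0 k *
      ∏ i ∈ range k, (1 - t * koebe (x * p ^ i)) / (1 - t * koebe (p * p ^ i)) := by
  simp only [pairRatio, pairPochhammer, ← prod_div_distrib, ← prod_mul_distrib]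
  refine prod_congr rfl fun i hi ↦ ?_
  rw [pairFactor_eq_mul (hx i (mem_range.mp hi)), pairFactor_eq_mul (hp i (mem_range.mp hi)),
    mul_div_mul_comm]

theorem map_koebeSum_le_one (hp : v p ≤ 1) (hx : v x ≤ 1) (hx₁ : ∀ i < k, v (1 - x * p ^ i) = 1)
    (hp₁ : ∀ i < k, v (1 - p * p ^ i) = 1) : v (koebeSum p x k) ≤ 1 :=
  v.map_sum_le fun i hi ↦ v.map_sub_le
    (map_koebe_le_one (map_mul_pow_le_one hp hp i) (hp₁ i (mem_range.mp hi)))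
    (map_koebe_le_one (map_mul_pow_le_one hp hx i) (hx₁ i (mem_range.mp hi)))

theorem map_pairRatio_zero_le_one (hp : v p ≤ 1) (hx : v x ≤ 1)
    (hp₁ : ∀ i < k, v (1 - p * p ^ i) = 1) : v (pairRatio p x 0 k) ≤ 1 := by
  rw [pairRatio_zero, map_pow, map_div₀, map_qPochhammer_eq_one hp₁, div_one]
  exact pow_le_one' (map_qPochhammer_le_one hp hx k) 2

theorem map_pairRatio_sub_le (hp : v p ≤ 1) (hx : v x ≤ 1) (hx₁ : ∀ i < k, v (1 - x * p ^ i) = 1)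
    (hp₁ : ∀ i < k, v (1 - p * p ^ i) = 1) (ht : v t < 1) :
    v (pairRatio p x t k - pairRatio p x 0 k * (1 + t * koebeSum p x k)) ≤ v t ^ 2 := by
  have hne {y : K} (hy : v y = 1) : y ≠ 0 := v.ne_zero_iff.mp (hy ▸ one_ne_zero)
  rw [pairRatio_eq_mul_prod (fun i hi ↦ hne (hx₁ i hi)) (fun i hi ↦ hne (hp₁ i hi)), ← mul_sub]
  have hκx (i) (hi : i < k) := map_koebe_le_one (map_mul_pow_le_one hp hx i) (hx₁ i hi)
  have hκp (i) (hi : i < k) := map_koebe_le_one (map_mul_pow_le_one hp hp i) (hp₁ i hi)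
  exact map_mul_le_of_le_one_left v (map_pairRatio_zero_le_one hp hx hp₁) <|
    map_prod_sub_one_add_mul_sum_le v ht.le (fun i hi ↦ v.map_sub_le (hκp i hi) (hκx i hi))
      fun i hi ↦ map_one_sub_div_one_sub_sub_le (hκx i hi) (hκp i hi) ht

end FirstOrder

section PrimitiveRoot

variable {K Γ₀ : Type*} [Field K] [LinearOrderedCommGroupWithZero Γ₀] {v : Valuation K Γ₀} {q : K}
  {n : ℕ}

/-- `q` is a unit for `v` whose residue class is a primitive `n`-th root of unity. -/
structure IsPrimitiveRootModulo (v : Valuation K Γ₀) (q : K) (n : ℕ) : Prop where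
  one_sub_pow_lt_one : v (1 - q ^ n) < 1
  one_sub_pow_eq_one (s : ℕ) : ¬n ∣ s → v (1 - q ^ s) = 1

namespace IsPrimitiveRootModulo

theorem map_one_sub_eq_one (h : IsPrimitiveRootModulo v q n) (hn : n ≠ 1) : v (1 - q) = 1 := by
  simpa only [pow_one] using h.one_sub_pow_eq_one 1 (by rwa [Nat.dvd_one])

variable [NeZero n]

theorem map_eq_one (h : IsPrimitiveRootModulo v q n) : v q = 1 := by
  have hpow : v (q ^ n) = 1 := by
    simpa only [sub_sub_cancel] using v.map_one_sub_of_lt h.one_sub_pow_lt_one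
  exact (pow_eq_one_iff.mp ((map_pow v q n).symm.trans hpow)).resolve_right (NeZero.ne n)

theorem ne_zero (h : IsPrimitiveRootModulo v q n) : q ≠ 0 :=
  v.ne_zero_iff.mp (h.map_eq_one ▸ one_ne_zero)

theorem map_pow_eq_one (h : IsPrimitiveRootModulo v q n) (s : ℕ) : v (q ^ s) = 1 := by
  rw [map_pow, h.map_eq_one, one_pow]

theorem map_one_sub_pow_le_one (h : IsPrimitiveRootModulo v q n) (s : ℕ) : v (1 - q ^ s) ≤ 1 :=
  v.map_sub_le v.map_one.le (h.map_pow_eq_one s).le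

theorem map_pow_sub_pow_le_of_modEq (h : IsPrimitiveRootModulo v q n) {a b : ℕ}
    (hab : a ≡ b [MOD n]) : v (q ^ a - q ^ b) ≤ v (1 - q ^ n) := by
  wlog hle : a ≤ b generalizing a b
  · rw [v.map_sub_swap]
    exact this hab.symm (le_of_not_ge hle)
  obtain ⟨c, hc⟩ := (Nat.modEq_iff_dvd' hle).mp hab
  have hsplit : q ^ a - q ^ b = q ^ a * (1 ^ c - (q ^ n) ^ c) := by
    rw [one_pow, ← pow_mul, ← hc, mul_sub, mul_one, ← pow_add, Nat.add_sub_cancel' hle]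
  rw [hsplit, map_mul, h.map_pow_eq_one, one_mul]
  exact map_pow_sub_pow_le v v.map_one.le (h.map_pow_eq_one n).le le_rfl c

end IsPrimitiveRootModulo

end PrimitiveRoot

section Reflection

variable {K Γ₀ : Type*} [Field K] [LinearOrderedCommGroupWithZero Γ₀] {v : Valuation K Γ₀}
  {p x : K}

/-- The Gaussian binomial coefficient with base `p`. -/
def qBinomial (p : K) (m k : ℕ) : K :=
  qPochhammer p p m / (qPochhammer p p k * qPochhammer p p (m - k))

theorem qBinomial_symm (p : K) {m k : ℕ} (hk : k ≤ m) :
    qBinomial p m (m - k) = qBinomial p m k := by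
  rw [qBinomial, qBinomial, Nat.sub_sub_self hk, mul_comm (qPochhammer p p k)]

theorem map_qBinomial_eq_one {m k : ℕ} (hp₁ : ∀ i < m, v (1 - p * p ^ i) = 1) (hk : k ≤ m) :
    v (qBinomial p m k) = 1 := by
  have hR {l : ℕ} (hl : l ≤ m) : v (qPochhammer p p l) = 1 :=
    map_qPochhammer_eq_one fun i hi ↦ hp₁ i (hi.trans_le hl)
  rw [qBinomial, map_div₀, map_mul, hR le_rfl, hR hk, hR (Nat.sub_le m k), one_mul, div_one]

theorem map_qPochhammer_div_sub_le {m k : ℕ} (hp : v p ≤ 1) (hx : v x ≤ 1)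
    (hp₁ : ∀ i < m, v (1 - p * p ^ i) = 1) (hk : k ≤ m) :
    v (qPochhammer p x k / qPochhammer p p k - (∏ i ∈ range k, -(x * p ^ i)) * qBinomial p m k) ≤
      v (1 - x * p ^ m) := by
  have hR {l : ℕ} (hl : l ≤ m) : v (qPochhammer p p l) = 1 :=
    map_qPochhammer_eq_one fun i hi ↦ hp₁ i (hi.trans_le hl)
  have hR₀ {l : ℕ} (hl : l ≤ m) : qPochhammer p p l ≠ 0 := v.ne_zero_iff.mp (hR hl ▸ one_ne_zero)
  have hreflect := map_qPochhammer_mul_sub_le hp hx k (m - k)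
  rw [Nat.add_sub_cancel' hk] at hreflect
  rw [qBinomial, ← mul_div_assoc, ← mul_div_mul_right _ _ (hR₀ (Nat.sub_le m k)), ← sub_div,
    map_div₀, map_mul, hR hk, hR (Nat.sub_le m k), one_mul, div_one]
  exact hreflect

theorem map_koebe_sub_koebe_le {y : K} (hx : v x ≤ 1) (hy : v y ≤ 1) (hx₁ : v (1 - x) = 1)
    (hy₁ : v (1 - y) = 1) : v (koebe x - koebe y) ≤ v (1 - x * y) := by
  have hne {z : K} (hz : v z = 1) : z ≠ 0 := v.ne_zero_iff.mp (hz ▸ one_ne_zero)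
  have hx₀ := hne hx₁
  have hy₀ := hne hy₁
  have heq : koebe x - koebe y = (x - y) * (1 - x * y) / ((1 - x) ^ 2 * (1 - y) ^ 2) := by
    rw [koebe, koebe]
    field_simp
    ring
  rw [heq, map_div₀, map_mul v ((1 - x) ^ 2), map_pow, map_pow, hx₁, hy₁, one_pow, one_mul, div_one]
  exact map_mul_le_of_le_one_left v (v.map_sub_le hx hy) le_rfl

theorem map_sum_koebe_add_sub_le {k j : ℕ} (hp : v p ≤ 1) (hx : v x ≤ 1)
    (hx₁ : ∀ i < k + j, v (1 - x * p ^ i) = 1) (hp₁ : ∀ i < k + j, v (1 - p * p ^ i) = 1) :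
    v (∑ i ∈ range k, koebe (x * p ^ i) + ∑ i ∈ range j, koebe (p * p ^ i) -
      ∑ i ∈ range (k + j), koebe (p * p ^ i)) ≤ v (1 - x * p ^ (k + j)) := by
  induction k generalizing j with
  | zero => simp
  | succ k ih =>
    rw [Nat.add_right_comm, add_assoc] at hx₁ hp₁ ⊢
    have hswap := map_koebe_sub_koebe_le (map_mul_pow_le_one hp hx k) (map_mul_pow_le_one hp hp j)
      (hx₁ k (by omega)) (hp₁ j (by omega))
    rw [show x * p ^ k * (p * p ^ j) = x * p ^ (k + (j + 1)) by ring] at hswap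
    refine (congrArg v ?_).trans_le (v.map_add_le (ih hx₁ hp₁) hswap)
    rw [sum_range_succ, sum_range_succ _ j]
    ring

theorem map_koebeSum_sub_koebeSum_le {k j : ℕ} (hp : v p ≤ 1) (hx : v x ≤ 1)
    (hx₁ : ∀ i < k + j, v (1 - x * p ^ i) = 1) (hp₁ : ∀ i < k + j, v (1 - p * p ^ i) = 1) :
    v (koebeSum p x k - koebeSum p x j) ≤ v (1 - x * p ^ (k + j)) := by
  have hkj := map_sum_koebe_add_sub_le hp hx hx₁ hp₁
  rw [add_comm k j] at hx₁ hp₁ hkj ⊢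
  refine (congrArg v ?_).trans_le (v.map_sub_le (map_sum_koebe_add_sub_le hp hx hx₁ hp₁) hkj)
  simp only [koebeSum, sum_sub_distrib]
  ring

end Reflection

section Antisymmetry

variable {K Γ₀ : Type*} [Field K] [LinearOrderedCommGroupWithZero Γ₀] {v : Valuation K Γ₀} {q : K}
  {m k : ℕ}

/-- For `n = 3 m + 1` the difference `dougallHalf q m k - dougallHalf q m (m - k)` is congruent to
`dougallTerm q k` modulo `1 - q ^ n`. -/
def dougallHalf (q : K) (m k : ℕ) : K :=
  qBinomial (q ^ 3) m k ^ 6 * (q ^ (3 * k) ^ 2 / (1 - q))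

theorem prod_neg_mul_cube_pow_pow_six (q : K) (k : ℕ) :
    (∏ i ∈ range k, -(q * (q ^ 3) ^ i)) ^ 6 * q ^ (3 * k) = q ^ (3 * k) ^ 2 := by
  induction k with
  | zero => simp
  | succ k ih =>
    calc _ = (∏ i ∈ range k, -(q * (q ^ 3) ^ i)) ^ 6 * q ^ (3 * k) * q ^ (18 * k + 9) := by
          rw [prod_range_succ]
          ring
      _ = _ := by
          rw [ih]
          ring

namespace IsPrimitiveRootModulo

section Units

variable (h : IsPrimitiveRootModulo v q (3 * m + 1))

include h

theorem map_one_sub_mul_cube_pow_eq_one {s i : ℕ} (hs : ¬3 * m + 1 ∣ s + 3 * i) :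
    v (1 - q ^ s * (q ^ 3) ^ i) = 1 := by
  rw [← pow_mul, ← pow_add]
  exact h.one_sub_pow_eq_one _ hs

theorem map_one_sub_self_mul_cube_pow_eq_one {i : ℕ} (hi : i < m) :
    v (1 - q * (q ^ 3) ^ i) = 1 := by
  simpa only [pow_one] using h.map_one_sub_mul_cube_pow_eq_one (s := 1) (i := i)
    (Nat.not_dvd_of_pos_of_lt (by omega) (by omega))

theorem map_one_sub_sq_mul_cube_pow_eq_one {i : ℕ} (hi : i < m) :
    v (1 - q ^ 2 * (q ^ 3) ^ i) = 1 :=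
  h.map_one_sub_mul_cube_pow_eq_one (Nat.not_dvd_of_pos_of_lt (by omega) (by omega))

theorem map_one_sub_cube_mul_cube_pow_eq_one {i : ℕ} (hi : i < 3 * m) :
    v (1 - q ^ 3 * (q ^ 3) ^ i) = 1 := by
  refine h.map_one_sub_mul_cube_pow_eq_one fun hdvd ↦ ?_
  have hcop : Nat.Coprime (3 * m + 1) 3 := by simp
  rw [show 3 + 3 * i = 3 * (i + 1) by ring, hcop.dvd_mul_left] at hdvd
  exact Nat.not_dvd_of_pos_of_lt i.succ_pos (by omega) hdvd

theorem map_qPochhammer_cube_eq_one (hk : k ≤ 3 * m) :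
    v (qPochhammer (q ^ 3) (q ^ 3) k) = 1 :=
  map_qPochhammer_eq_one fun _ hi ↦ h.map_one_sub_cube_mul_cube_pow_eq_one (hi.trans_le hk)

theorem map_koebeSum_sub_koebeSum_reflect_le (hk : k ≤ m) :
    v (koebeSum (q ^ 3) q k - koebeSum (q ^ 3) q (m - k)) ≤ v (1 - q ^ (3 * m + 1)) := by
  obtain ⟨j, rfl⟩ := Nat.exists_eq_add_of_le hk
  rw [Nat.add_sub_cancel_left, pow_succ' q (3 * _), pow_mul]
  exact map_koebeSum_sub_koebeSum_le (h.map_pow_eq_one 3).le h.map_eq_one.le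
    (fun i hi ↦ h.map_one_sub_self_mul_cube_pow_eq_one hi)
    fun i hi ↦ h.map_one_sub_cube_mul_cube_pow_eq_one (by omega)

end Units

variable (h : IsPrimitiveRootModulo v q (3 * m + 1)) (hm : m ≠ 0)

include h hm

theorem map_qNumber_le_one (s : ℕ) : v (qNumber q s) ≤ 1 := by
  rw [qNumber, map_div₀, h.map_one_sub_eq_one (by omega), div_one]
  exact h.map_one_sub_pow_le_one s

theorem map_dougallHalf_le_one (hk : k ≤ m) : v (dougallHalf q m k) ≤ 1 := by
  rw [dougallHalf, map_mul, map_pow, map_div₀, h.map_pow_eq_one, h.map_one_sub_eq_one (by omega),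
    map_qBinomial_eq_one (fun i hi ↦ h.map_one_sub_cube_mul_cube_pow_eq_one (by omega)) hk]
  simp

theorem map_dougallTerm_sub_qBinomial_le (hk : k ≤ m) :
    v (dougallTerm q k - qNumber q (6 * k + 1) * (q ^ (3 * k) ^ 2 * qBinomial (q ^ 3) m k ^ 6)) ≤
      v (1 - q ^ (3 * m + 1)) := by
  set P := qPochhammer (q ^ 3) q k / qPochhammer (q ^ 3) (q ^ 3) k with hP
  set σ := ∏ i ∈ range k, -(q * (q ^ 3) ^ i) with hσ
  set B := qBinomial (q ^ 3) m k
  have hp : v (q ^ 3) ≤ 1 := (h.map_pow_eq_one 3).le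
  have hunit (i) (hi : i < m) := h.map_one_sub_cube_mul_cube_pow_eq_one (i := i) (by omega)
  have hreflect : v (P - σ * B) ≤ v (1 - q ^ (3 * m + 1)) := by
    rw [pow_succ' q (3 * m), pow_mul]
    exact map_qPochhammer_div_sub_le hp h.map_eq_one.le hunit hk
  have hP₁ : v P ≤ 1 := by
    rw [hP, map_div₀, h.map_qPochhammer_cube_eq_one (by omega), div_one]
    exact map_qPochhammer_le_one hp h.map_eq_one.le k
  have hσB₁ : v (σ * B) ≤ 1 := by
    rw [hσ, map_mul, map_qBinomial_eq_one hunit hk, mul_one, map_prod]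
    refine prod_le_one' fun i _ ↦ ?_
    rw [v.map_neg]
    exact map_mul_pow_le_one hp h.map_eq_one.le i
  have hcoeff : v (qNumber q (6 * k + 1) * q ^ (3 * k)) ≤ 1 :=
    map_mul_le_of_le_one_left v (h.map_qNumber_le_one hm _) (h.map_pow_eq_one _).le
  rw [← prod_neg_mul_cube_pow_pow_six, dougallTerm, mul_div_assoc, ← div_pow, ← hP]
  refine (congrArg v ?_).trans_le
    (map_mul_le_of_le_one_left v hcoeff (map_pow_sub_pow_le v hP₁ hσB₁ hreflect 6))
  ring

theorem map_dougallTerm_sub_dougallHalf_sub_le (hk : k ≤ m) :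
    v (dougallTerm q k - (dougallHalf q m k - dougallHalf q m (m - k))) ≤
      v (1 - q ^ (3 * m + 1)) := by
  have hmod : (3 * (m - k)) ^ 2 ≡ (3 * k + 1) ^ 2 [MOD 3 * m + 1] := by
    obtain ⟨j, rfl⟩ := Nat.exists_eq_add_of_le hk
    rw [Nat.add_sub_cancel_left, Nat.modEq_iff_dvd]
    exact ⟨3 * k + 1 - 3 * j, by push_cast; ring⟩
  have hscale : v (qBinomial (q ^ 3) m k ^ 6 / (1 - q)) ≤ 1 := by
    rw [map_div₀, map_pow, h.map_one_sub_eq_one (by omega), div_one, map_qBinomial_eq_one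
      (fun i hi ↦ h.map_one_sub_cube_mul_cube_pow_eq_one (by omega)) hk, one_pow]
  refine (congrArg v ?_).trans_le (v.map_add_le (h.map_dougallTerm_sub_qBinomial_le hm hk)
    (map_mul_le_of_le_one_left v hscale (h.map_pow_sub_pow_le_of_modEq hmod)))
  rw [dougallHalf, dougallHalf, qBinomial_symm _ hk, qNumber]
  ring

theorem map_dougallTerm_le_one (hk : k ≤ 3 * m) : v (dougallTerm q k) ≤ 1 := by
  rw [dougallTerm, map_mul, map_div₀, map_pow v (qPochhammer _ (q ^ 3) _),
    h.map_qPochhammer_cube_eq_one hk, one_pow, div_one, h.map_pow_eq_one, mul_one, map_mul, map_pow]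
  exact mul_le_one' (h.map_qNumber_le_one hm _) <|
    pow_le_one' (map_qPochhammer_le_one (h.map_pow_eq_one 3).le h.map_eq_one.le k) 6

theorem map_dougallTerm_le (hmk : m < k) (hk : k ≤ 3 * m) :
    v (dougallTerm q k) ≤ v (1 - q ^ (3 * m + 1)) ^ 6 := by
  have hP : v (qPochhammer (q ^ 3) q k) ≤ v (1 - q ^ (3 * m + 1)) := by
    rw [qPochhammer, ← mul_prod_erase _ _ (mem_range.mpr hmk), ← pow_mul, ← pow_succ']
    refine map_mul_le_of_le_one_right v le_rfl ?_
    rw [map_prod]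
    exact prod_le_one' fun i _ ↦ v.map_sub_le v.map_one.le
      (map_mul_pow_le_one (h.map_pow_eq_one 3).le h.map_eq_one.le i)
  rw [dougallTerm, map_mul, map_div₀, map_pow v (qPochhammer _ (q ^ 3) _),
    h.map_qPochhammer_cube_eq_one hk, one_pow, div_one, h.map_pow_eq_one, mul_one, map_mul, map_pow]
  exact (mul_le_mul' (h.map_qNumber_le_one hm _) (pow_le_pow_left' hP 6)).trans_eq (one_mul _)

theorem map_sum_dougallTerm_mul_koebeSum_sq_le :
    v (∑ k ∈ range (m + 1), dougallTerm q k * koebeSum (q ^ 3) q k ^ 2) ≤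
      v (1 - q ^ (3 * m + 1)) := by
  have hκ {k : ℕ} (hk : k ≤ m) : v (koebeSum (q ^ 3) q k) ≤ 1 :=
    map_koebeSum_le_one (h.map_pow_eq_one 3).le h.map_eq_one.le
      (fun i hi ↦ h.map_one_sub_self_mul_cube_pow_eq_one (hi.trans_le hk))
      fun i hi ↦ h.map_one_sub_cube_mul_cube_pow_eq_one (by omega)
  refine map_sum_mul_le_of_antisymm v (f := dougallHalf q m) (fun k hk ↦ ?_)
    (fun k hk ↦ h.map_dougallHalf_le_one hm hk)
    (fun k hk ↦ h.map_dougallTerm_sub_dougallHalf_sub_le hm hk) fun k hk ↦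
      map_pow_sub_pow_le v (hκ hk) (hκ (Nat.sub_le m k))
        (h.map_koebeSum_sub_koebeSum_reflect_le hk) 2
  rw [map_pow]
  exact pow_le_one' (hκ hk) 2

end IsPrimitiveRootModulo

end Antisymmetry

section Supercongruence

variable {K Γ₀ : Type*} [Field K] [LinearOrderedCommGroupWithZero Γ₀] {v : Valuation K Γ₀} {q : K}
  {m : ℕ}

/-- The value at `y = q ^ n`, where `n = 3 m + 1`, of the deformation parameter
`(1 - y) ^ 2 / y`. -/
def dougallParameter (q : K) (m : ℕ) : K :=
  (1 - q ^ (3 * m + 1)) ^ 2 / q ^ (3 * m + 1)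

/-- The product `[n] (q²; q³)_m³ / (q³; q³)_m³`, where `n = 3 m + 1`. -/
def dougallProduct (q : K) (m : ℕ) : K :=
  qNumber q (3 * m + 1) * (qPochhammer (q ^ 3) (q ^ 2) m / qPochhammer (q ^ 3) (q ^ 3) m) ^ 3

/-- Jackson's sum evaluates the symmetric bilinear form `∑ k, dougallWeight q k * x k * y k` at all
pairs with one entry `pairRatio _ _ (dougallParameter q m)`, so polarization leaves only the square
of a small difference. -/
theorem sum_dougallTerm_sub_eq (hq₀ : q ≠ 0) (hq : ¬IsOfFinOrder q)
    (h₀ : pairPochhammer (q ^ 3) (q ^ 3) 0 m ≠ 0)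
    (hu : pairPochhammer (q ^ 3) (q ^ 3) (dougallParameter q m) m ≠ 0) (D : K) :
    ∑ k ∈ range (m + 1), dougallTerm q k - dougallProduct q m * (1 - dougallParameter q m * D) =
      ∑ k ∈ range (m + 1), dougallWeight q k *
          (pairRatio (q ^ 3) q (dougallParameter q m) k - pairRatio (q ^ 3) q 0 k) ^ 2 -
        qNumber q (3 * m + 1) *
          (qPochhammer (q ^ 3) (q ^ 2) m / qPochhammer (q ^ 3) (q ^ 3) m) *
            (pairRatio (q ^ 3) (q ^ 2) (dougallParameter q m) m -
              pairRatio (q ^ 3) (q ^ 2) 0 m * (1 + dougallParameter q m * D)) := by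
  have hmixed := sum_dougallWeight_mul hq₀ hq m h₀
  have hsquare := sum_dougallWeight_mul hq₀ hq m hu
  rw [← dougallParameter] at hmixed hsquare
  have hterm : ∑ k ∈ range (m + 1), dougallTerm q k =
      ∑ k ∈ range (m + 1), dougallWeight q k *
          (pairRatio (q ^ 3) q (dougallParameter q m) k - pairRatio (q ^ 3) q 0 k) ^ 2 +
        2 * ∑ k ∈ range (m + 1), dougallWeight q k *
          (pairRatio (q ^ 3) q (dougallParameter q m) k * pairRatio (q ^ 3) q 0 k) -
        ∑ k ∈ range (m + 1), dougallWeight q k *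
          (pairRatio (q ^ 3) q (dougallParameter q m) k *
            pairRatio (q ^ 3) q (dougallParameter q m) k) := by
    rw [mul_sum, ← sum_add_distrib, ← sum_sub_distrib]
    refine sum_congr rfl fun k _ ↦ ?_
    rw [dougallTerm_eq]
    ring
  rw [hterm, hmixed, hsquare, dougallProduct, pairRatio_zero _ (q ^ 2)]
  ring

theorem map_sq_sub_sq_le {x y : K} {r s : Γ₀} (hxy : v (x - y) ≤ r) (hy : v y ≤ s) (hrs : r ≤ s) :
    v (x ^ 2 - y ^ 2) ≤ r * s := by
  have hadd : v (x + y) ≤ s := by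
    rw [show x + y = x - y + (y + y) by ring]
    exact v.map_add_le (hxy.trans hrs) (v.map_add_le hy hy)
  rw [sq_sub_sq, map_mul, mul_comm]
  exact mul_le_mul' hxy hadd

namespace IsPrimitiveRootModulo

variable (h : IsPrimitiveRootModulo v q (3 * m + 1))

include h

theorem map_dougallParameter : v (dougallParameter q m) = v (1 - q ^ (3 * m + 1)) ^ 2 := by
  rw [dougallParameter, map_div₀, map_pow, h.map_pow_eq_one, div_one]

theorem map_dougallParameter_lt_one : v (dougallParameter q m) < 1 := by
  rw [h.map_dougallParameter]
  exact pow_lt_one' h.one_sub_pow_lt_one two_ne_zero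

theorem map_qPochhammer_sq_div_le_one :
    v (qPochhammer (q ^ 3) (q ^ 2) m / qPochhammer (q ^ 3) (q ^ 3) m) ≤ 1 := by
  rw [map_div₀, h.map_qPochhammer_cube_eq_one (by omega), div_one]
  exact map_qPochhammer_le_one (h.map_pow_eq_one 3).le (h.map_pow_eq_one 2).le m

theorem pairPochhammer_cube_ne_zero {t : K} (ht : v t < 1) :
    pairPochhammer (q ^ 3) (q ^ 3) t m ≠ 0 := by
  have hcube := (h.map_pow_eq_one 3).le
  have hone := map_pairPochhammer_eq_one (k := m) hcube hcube
    (fun i hi ↦ h.map_one_sub_cube_mul_cube_pow_eq_one (by omega)) ht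
  exact v.ne_zero_iff.mp (hone ▸ one_ne_zero)

theorem map_koebeSum_sq_le_one : v (koebeSum (q ^ 3) (q ^ 2) m) ≤ 1 :=
  map_koebeSum_le_one (h.map_pow_eq_one 3).le (h.map_pow_eq_one 2).le
    (fun _ hi ↦ h.map_one_sub_sq_mul_cube_pow_eq_one hi)
    fun i hi ↦ h.map_one_sub_cube_mul_cube_pow_eq_one (by omega)

theorem map_pairRatio_sub_sq_sub_le {k : ℕ} (hk : k ≤ m) :
    v ((pairRatio (q ^ 3) q (dougallParameter q m) k - pairRatio (q ^ 3) q 0 k) ^ 2 -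
      (dougallParameter q m * (pairRatio (q ^ 3) q 0 k * koebeSum (q ^ 3) q k)) ^ 2) ≤
        v (1 - q ^ (3 * m + 1)) ^ 6 := by
  have hp := (h.map_pow_eq_one 3).le
  have hunit (i) (hi : i < k) := h.map_one_sub_self_mul_cube_pow_eq_one (hi.trans_le hk)
  have hcube (i) (hi : i < k) := h.map_one_sub_cube_mul_cube_pow_eq_one (i := i) (by omega)
  have hfirst := map_pairRatio_sub_le hp h.map_eq_one.le hunit hcube h.map_dougallParameter_lt_one
  rw [h.map_dougallParameter, ← pow_mul] at hfirst
  have hsmall : v (dougallParameter q m * (pairRatio (q ^ 3) q 0 k * koebeSum (q ^ 3) q k)) ≤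
      v (1 - q ^ (3 * m + 1)) ^ 2 :=
    map_mul_le_of_le_one_right v h.map_dougallParameter.le <| map_mul_le_of_le_one_left v
      (map_pairRatio_zero_le_one hp h.map_eq_one.le hcube)
      (map_koebeSum_le_one hp h.map_eq_one.le hunit hcube)
  rw [show 6 = 2 * 2 + 2 by rfl, pow_add]
  refine map_sq_sub_sq_le ?_ hsmall
    (pow_le_pow_right_of_le_one' h.one_sub_pow_lt_one.le (by norm_num))
  refine (congrArg v ?_).trans_le hfirst
  ring

variable (hm : m ≠ 0)

include hm

theorem map_qNumber_eq : v (qNumber q (3 * m + 1)) = v (1 - q ^ (3 * m + 1)) := by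
  rw [qNumber, map_div₀, h.map_one_sub_eq_one (by omega), div_one]

theorem map_dougallProduct_le : v (dougallProduct q m) ≤ v (1 - q ^ (3 * m + 1)) := by
  refine map_mul_le_of_le_one_right v (h.map_qNumber_eq hm).le ?_
  rw [map_pow]
  exact pow_le_one' h.map_qPochhammer_sq_div_le_one 3

theorem map_dougallWeight_le_one {k : ℕ} (hk : k ≤ m) : v (dougallWeight q k) ≤ 1 := by
  have hp := (h.map_pow_eq_one 3).le
  have hratio := map_pairRatio_zero_le_one (k := k) hp h.map_eq_one.le
    fun i hi ↦ h.map_one_sub_cube_mul_cube_pow_eq_one (by omega)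
  rw [pairRatio_zero] at hratio
  exact map_mul_le_of_le_one_left v
    (map_mul_le_of_le_one_left v (h.map_qNumber_le_one hm _) hratio) (h.map_pow_eq_one _).le

theorem map_sum_dougallWeight_mul_sq_le :
    v (∑ k ∈ range (m + 1), dougallWeight q k *
        (pairRatio (q ^ 3) q (dougallParameter q m) k - pairRatio (q ^ 3) q 0 k) ^ 2) ≤
      v (1 - q ^ (3 * m + 1)) ^ 5 := by
  have hlin : v (∑ k ∈ range (m + 1), dougallWeight q k *
      ((pairRatio (q ^ 3) q (dougallParameter q m) k - pairRatio (q ^ 3) q 0 k) ^ 2 -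
        (dougallParameter q m * (pairRatio (q ^ 3) q 0 k * koebeSum (q ^ 3) q k)) ^ 2)) ≤
      v (1 - q ^ (3 * m + 1)) ^ 6 :=
    v.map_sum_le fun k hk ↦
      have hkm := mem_range_succ_iff.mp hk
      map_mul_le_of_le_one_left v (h.map_dougallWeight_le_one hm hkm)
        (h.map_pairRatio_sub_sq_sub_le hkm)
  have hquad : v (dougallParameter q m ^ 2 *
      ∑ k ∈ range (m + 1), dougallTerm q k * koebeSum (q ^ 3) q k ^ 2) ≤
        v (1 - q ^ (3 * m + 1)) ^ 5 := by
    rw [map_mul, map_pow, h.map_dougallParameter, ← pow_mul, pow_succ _ 4]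
    exact mul_le_mul_right (h.map_sum_dougallTerm_mul_koebeSum_sq_le hm) _
  refine (congrArg v ?_).trans_le (v.map_add_le
    (hlin.trans (pow_le_pow_right_of_le_one' h.one_sub_pow_lt_one.le (by norm_num))) hquad)
  rw [mul_sum, ← sum_add_distrib]
  refine sum_congr rfl fun k _ ↦ ?_
  rw [dougallTerm_eq]
  ring

theorem map_sum_dougallTerm_sub_le (hq : ¬IsOfFinOrder q) :
    v (∑ k ∈ range (m + 1), dougallTerm q k -
      dougallProduct q m * (1 - dougallParameter q m * koebeSum (q ^ 3) (q ^ 2) m)) ≤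
        v (1 - q ^ (3 * m + 1)) ^ 5 := by
  have hu := h.map_dougallParameter_lt_one
  rw [sum_dougallTerm_sub_eq h.ne_zero hq (h.pairPochhammer_cube_ne_zero (by simp))
    (h.pairPochhammer_cube_ne_zero hu)]
  refine v.map_sub_le (h.map_sum_dougallWeight_mul_sq_le hm) ?_
  have hfirst := map_pairRatio_sub_le (h.map_pow_eq_one 3).le (h.map_pow_eq_one 2).le
    (fun _ hi ↦ h.map_one_sub_sq_mul_cube_pow_eq_one hi)
    (fun i hi ↦ h.map_one_sub_cube_mul_cube_pow_eq_one (by omega)) hu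
  rw [h.map_dougallParameter, ← pow_mul] at hfirst
  rw [map_mul, pow_succ' _ 4]
  exact mul_le_mul' (map_mul_le_of_le_one_right v (h.map_qNumber_eq hm).le
    h.map_qPochhammer_sq_div_le_one) hfirst

theorem map_sq_sum_dougallTerm_sub_le (hq : ¬IsOfFinOrder q) :
    v ((∑ k ∈ range (m + 1), dougallTerm q k) ^ 2 - dougallProduct q m ^ 2 *
      (1 - 2 * ((1 - q ^ (3 * m + 1)) ^ 2 * (2 - q ^ (3 * m + 1)) *
        koebeSum (q ^ 3) (q ^ 2) m))) ≤ v (1 - q ^ (3 * m + 1)) ^ 6 := by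
  have hsum := h.map_sum_dougallTerm_sub_le hm hq
  have hJ := h.map_dougallProduct_le hm
  have hD := h.map_koebeSum_sq_le_one
  have hε := h.one_sub_pow_lt_one.le
  have hu := h.map_dougallParameter
  have huQ : dougallParameter q m * q ^ (3 * m + 1) = (1 - q ^ (3 * m + 1)) ^ 2 :=
    div_mul_cancel₀ _ (pow_ne_zero _ h.ne_zero)
  set J := dougallProduct q m
  set D := koebeSum (q ^ 3) (q ^ 2) m
  set u := dougallParameter q m
  set Q := q ^ (3 * m + 1)
  have hlin : v (1 - u * D) ≤ 1 := v.map_sub_le v.map_one.le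
    (map_mul_le_of_le_one_left v (hu.trans_le (pow_le_one' hε 2)) hD)
  have hsq := map_sq_sub_sq_le hsum (map_mul_le_of_le_one_right v hJ hlin)
    (pow_le_of_le_one zero_le hε (by norm_num))
  rw [← pow_succ] at hsq
  have hrest : v (J ^ 2 * (u * (u * D ^ 2 - ((1 - Q) ^ 2 * D + (1 - Q) ^ 2 * D)))) ≤
      v (1 - Q) ^ 6 := by
    have hQD : v ((1 - Q) ^ 2 * D) ≤ v (1 - Q) ^ 2 :=
      map_mul_le_of_le_one_right v (map_pow v _ 2).le hD
    have huD : v (u * D ^ 2) ≤ v (1 - Q) ^ 2 :=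
      map_mul_le_of_le_one_right v hu.le ((map_pow v D 2).trans_le (pow_le_one' hD 2))
    rw [map_mul, map_mul, map_pow, hu, show 6 = 2 + (2 + 2) by rfl, pow_add, pow_add]
    exact mul_le_mul' (pow_le_pow_left' hJ 2)
      (mul_le_mul' le_rfl (v.map_sub_le huD (v.map_add_le hQD hQD)))
  refine (congrArg v ?_).trans_le (v.map_add_le hsq hrest)
  linear_combination -2 * J ^ 2 * D * (2 - Q) * huQ

end IsPrimitiveRootModulo

end Supercongruence

section DoubleSum

variable {K : Type*} [Field K] {q : K}

theorem qNumber_sq_mul_sum_Icc (h₁ : 1 - q ≠ 0) (m n : ℕ) :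
    qNumber q n ^ 2 * ∑ r ∈ Icc 1 m,
        (q ^ (3 * r - 1) / qNumber q (3 * r - 1) ^ 2 - q ^ (3 * r) / qNumber q (3 * r) ^ 2) =
      -((1 - q ^ n) ^ 2 * koebeSum (q ^ 3) (q ^ 2) m) := by
  have hterm (s : ℕ) :
      qNumber q n ^ 2 * (q ^ s / qNumber q s ^ 2) = (1 - q ^ n) ^ 2 * koebe (q ^ s) := by
    simp only [qNumber, koebe, div_pow]
    field_simp
  rw [← Ico_add_one_right_eq_Icc, sum_Ico_eq_sum_range, Nat.add_sub_cancel, koebeSum, mul_sum,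
    mul_sum, ← sum_neg_distrib]
  refine sum_congr rfl fun i _ ↦ ?_
  rw [mul_sub, hterm, hterm, ← pow_mul, ← pow_add, ← pow_add,
    show 3 * (1 + i) - 1 = 2 + 3 * i by omega, mul_add, mul_one]
  ring

theorem stmt_8_general {Γ₀ : Type*} [LinearOrderedCommGroupWithZero Γ₀] (v : Valuation K Γ₀)
    {n : ℕ} (hq : ¬IsOfFinOrder q) (h : IsPrimitiveRootModulo v q n) (h3 : n % 3 = 1) :
    v ((∑ i ∈ range n, ∑ j ∈ range (n - i), dougallTerm q i * dougallTerm q j) -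
      qNumber q n ^ 2 * qPochhammer (q ^ 3) (q ^ 2) ((n - 1) / 3) ^ 6 /
          qPochhammer (q ^ 3) (q ^ 3) ((n - 1) / 3) ^ 6 *
        (1 + 2 * qNumber q n ^ 2 * (2 - q ^ n) *
          ∑ r ∈ Icc 1 ((n - 1) / 3), (q ^ (3 * r - 1) / qNumber q (3 * r - 1) ^ 2 -
            q ^ (3 * r) / qNumber q (3 * r) ^ 2))) ≤ v (1 - q ^ n) ^ 6 := by
  obtain ⟨m, rfl⟩ : ∃ m, n = 3 * m + 1 := ⟨n / 3, by omega⟩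
  rw [show (3 * m + 1 - 1) / 3 = m by omega]
  have h₁ : 1 - q ≠ 0 := one_sub_ne_zero_of_not_isOfFinOrder hq
  rcases eq_or_ne m 0 with rfl | hm
  · simp [dougallTerm, qNumber, qPochhammer, div_self h₁]
  have htriangle := map_sum_triangle_sub_sq_le v (f := dougallTerm q) (m := m) (n := 3 * m + 1)
    (by omega) (fun i hi ↦ h.map_dougallTerm_le_one hm (by omega))
    fun i hi hmi ↦ h.map_dougallTerm_le hm hmi (by omega)
  refine (congrArg v ?_).trans_le
    (v.map_add_le htriangle (h.map_sq_sum_dougallTerm_sub_le hm hq))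
  rw [dougallProduct]
  linear_combination (-2 * (qNumber q (3 * m + 1) * (qPochhammer (q ^ 3) (q ^ 2) m /
    qPochhammer (q ^ 3) (q ^ 3) m) ^ 3) ^ 2 * (2 - q ^ (3 * m + 1))) *
      qNumber_sq_mul_sum_Icc h₁ m (3 * m + 1)

end DoubleSum

section Cyclotomic

open Polynomial IsDedekindDomain

theorem exists_not_dvd_and_pow_dvd_of_valuation_le {R K : Type*} [CommRing R] [IsDedekindDomain R]
    [Field K] [Algebra R K] [IsFractionRing R K] (w : HeightOneSpectrum R) {a : R}
    (hw : w.asIdeal = Ideal.span {a}) {x : K} {e : ℕ}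
    (hx : w.valuation K x ≤ w.valuation K (algebraMap R K a) ^ e) :
    ∃ N D : R, ¬a ∣ D ∧ a ^ e ∣ N ∧ x * algebraMap R K D = algebraMap R K N := by
  have ha : algebraMap R K a ≠ 0 := by
    rw [Ne, FaithfulSMul.algebraMap_eq_zero_iff]
    rintro rfl
    exact w.ne_bot (by rw [hw, Ideal.span_singleton_eq_bot])
  have hint : w.valuation K (x / algebraMap R K a ^ e) ≤ 1 := by
    rw [map_div₀, map_pow]
    exact div_le_one_of_le₀ hx zero_le
  obtain ⟨N, ⟨D, hD⟩, hND⟩ := w.exists_primeCompl_mul_eq_of_integer _ hint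
  refine ⟨a ^ e * N, D, fun hdvd ↦ hD ?_, dvd_mul_right _ _, ?_⟩
  · exact hw ▸ Ideal.mem_span_singleton.mpr hdvd
  · rw [map_mul, ← hND, map_pow]
    field_simp

theorem cyclotomic_dvd_one_sub_X_pow_iff {n s : ℕ} (hn : n ≠ 0) :
    cyclotomic n ℚ ∣ 1 - X ^ s ↔ n ∣ s := by
  rw [dvd_sub_comm]
  refine ⟨fun hdvd ↦ ?_, fun hdvd ↦
    (cyclotomic.dvd_X_pow_sub_one n ℚ).trans (dvd_pow_sub_one_of_dvd hdvd)⟩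
  have hζ := Complex.isPrimitiveRoot_exp n hn
  have hroot : aeval (Complex.exp (2 * Real.pi * Complex.I / n)) (cyclotomic n ℚ) = 0 := by
    rw [aeval_def, ← eval_map, map_cyclotomic]
    exact hζ.isRoot_cyclotomic (Nat.pos_of_ne_zero hn)
  refine hζ.dvd_of_pow_eq_one s (sub_eq_zero.mp ?_)
  simpa only [map_sub, map_pow, aeval_X, map_one] using
    aeval_eq_zero_of_dvd_aeval_eq_zero hdvd hroot

/-- The prime ideal of `ℚ[q]` generated by the cyclotomic polynomial `Φ_n`. -/
noncomputable def cyclotomicPrime {n : ℕ} (hn : 0 < n) : HeightOneSpectrum ℚ[X] :=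
  .ofPrime (p := Ideal.span {cyclotomic n ℚ}) <|
    (Ideal.prime_span_singleton_iff).mpr (cyclotomic.irreducible_rat hn).prime

theorem algebraMap_one_sub_X_pow (s : ℕ) :
    algebraMap ℚ[X] (RatFunc ℚ) (1 - X ^ s) = 1 - qq ^ s := by
  rw [map_sub, map_one, map_pow, RatFunc.algebraMap_X, qq]

theorem one_sub_X_pow_mem_cyclotomicPrime_iff {n s : ℕ} (hn : 0 < n) :
    1 - X ^ s ∈ (cyclotomicPrime hn).asIdeal ↔ n ∣ s :=
  Ideal.mem_span_singleton.trans (cyclotomic_dvd_one_sub_X_pow_iff hn.ne')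

theorem isPrimitiveRootModulo_qq {n : ℕ} (hn : 0 < n) :
    IsPrimitiveRootModulo ((cyclotomicPrime hn).valuation (RatFunc ℚ)) qq n where
  one_sub_pow_lt_one := by
    rw [← algebraMap_one_sub_X_pow]
    exact ((cyclotomicPrime hn).valuation_lt_one_iff_mem _).mpr
      ((one_sub_X_pow_mem_cyclotomicPrime_iff hn).mpr dvd_rfl)
  one_sub_pow_eq_one s hs := by
    rw [← algebraMap_one_sub_X_pow]
    exact (cyclotomicPrime hn).valuation_eq_one_iff_notMem.mpr
      ((one_sub_X_pow_mem_cyclotomicPrime_iff hn).not.mpr hs)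

theorem map_one_sub_qq_pow_le {n : ℕ} (hn : 0 < n) :
    (cyclotomicPrime hn).valuation (RatFunc ℚ) (1 - qq ^ n) ≤
      (cyclotomicPrime hn).valuation (RatFunc ℚ) (algebraMap ℚ[X] _ (cyclotomic n ℚ)) := by
  obtain ⟨g, hg⟩ := (cyclotomic_dvd_one_sub_X_pow_iff hn.ne').mpr (dvd_refl n)
  rw [← algebraMap_one_sub_X_pow, hg, map_mul]
  exact map_mul_le_of_le_one_right _ le_rfl ((cyclotomicPrime hn).valuation_le_one _)

theorem not_isOfFinOrder_qq : ¬IsOfFinOrder qq := by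
  have hinj : Function.Injective (algebraMap ℚ[X] (RatFunc ℚ) : ℚ[X] →* RatFunc ℚ) :=
    RatFunc.algebraMap_injective ℚ
  rw [qq, ← RatFunc.algebraMap_X]
  refine hinj.isOfFinOrder_iff.not.mpr fun hX ↦ ?_
  obtain ⟨k, hk, hXk⟩ := isOfFinOrder_iff_pow_eq_one.mp hX
  exact hk.ne' (by simpa only [natDegree_X_pow, natDegree_one] using congrArg natDegree hXk)

theorem poch_eq_qPochhammer (x : RatFunc ℚ) (k : ℕ) : poch x k = qPochhammer (qq ^ 3) x k := by
  simp only [poch, qPochhammer, pow_mul]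

theorem Aq_eq_dougallTerm (k : ℕ) : Aq k = dougallTerm qq k := by
  rw [Aq, dougallTerm, poch_eq_qPochhammer, poch_eq_qPochhammer]
  rfl

end Cyclotomic

/-- Theorem 1.1: for `n ≡ 1 (mod 3)`,
`∑_{i+j≤n-1} A_q(i)A_q(j) ≡ [n]² (q²;q³)_{(n-1)/3}⁶/(q³;q³)_{(n-1)/3}⁶ ·
{1 + 2[n]²(2-qⁿ) ∑_{r=1}^{(n-1)/3} (q^{3r-1}/[3r-1]² - q^{3r}/[3r]²)} (mod Φ_n(q)⁶)`,
i.e. the difference can be written as `N/D` with `Φ_n(q) ∤ D` and `Φ_n(q)⁶ ∣ N`. -/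
theorem stmt_8 (n : ℕ) (hn : 0 < n) (h3 : n % 3 = 1) :
    ∃ N D : Polynomial ℚ, ¬ (Polynomial.cyclotomic n ℚ ∣ D) ∧
      (Polynomial.cyclotomic n ℚ) ^ 6 ∣ N ∧
      ((∑ i ∈ range n, ∑ j ∈ range (n - i), Aq i * Aq j)
        - qint n ^ 2 * poch (qq ^ 2) ((n - 1) / 3) ^ 6 / poch (qq ^ 3) ((n - 1) / 3) ^ 6
          * (1 + 2 * qint n ^ 2 * (2 - qq ^ n)
            * ∑ r ∈ Icc 1 ((n - 1) / 3),
                (qq ^ (3 * r - 1) / qint (3 * r - 1) ^ 2 - qq ^ (3 * r) / qint (3 * r) ^ 2)))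
        * algebraMap (Polynomial ℚ) (RatFunc ℚ) D
      = algebraMap (Polynomial ℚ) (RatFunc ℚ) N := by
  simp only [Aq_eq_dougallTerm, poch_eq_qPochhammer]
  exact exists_not_dvd_and_pow_dvd_of_valuation_le (cyclotomicPrime hn) rfl <|
    (stmt_8_general _ not_isOfFinOrder_qq (isPrimitiveRootModulo_qq hn) h3).trans
      (pow_le_pow_left' (map_one_sub_qq_pow_le hn) 6)
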